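/- There exist l ∈ ℕ and a closed set T ⊂ (−1 + c, 1 − c) which is the union of 3^l pairwise disjoint closed intervals of equal length, with 0 contained in the interior of T, together with a constant κ > 0 such that for every x ∈ T the set {y : m_T(x, y) > 0} contains an interval of length κ, and moreover an n ∈ ℕ such that m_T^{(n)}(x, y) > 0 for all x, y ∈ T. -/

import Mathlib

open MeasureTheory

/-- The triangular density: `f_t(z) = (t − |z|)/t²` for `|z| ≤ t` and `0` otherwise. -/
noncomputable def triangularDensity (t z : ℝ) : ℝ :=
  if |z| ≤ t then (t - |z|) / t ^ 2 else 0

/-- The kernel `m_T(x,y)` of the branching process, with `t = (1−3a−2b)/2`: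
`m_T(x,y) = [a f_t(ay + 1/2 + a/2 − b − x) + 2a f_t(ay − x) + a f_t(ay − 1/2 − a/2 + b − x)]·1_T(y)`. -/
noncomputable def larssonKernel (a b : ℝ) (T : Set ℝ) (x y : ℝ) : ℝ :=
  (a * triangularDensity ((1 - 3 * a - 2 * b) / 2) (a * y + 1 / 2 + a / 2 - b - x) +
      2 * a * triangularDensity ((1 - 3 * a - 2 * b) / 2) (a * y - x) +
      a * triangularDensity ((1 - 3 * a - 2 * b) / 2) (a * y - 1 / 2 - a / 2 + b - x)) *
    Set.indicator T (fun _ => (1 : ℝ)) y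

/-- The iterated kernels, with the index shifted by one:
`larssonKernelIter a b T n = m_T^{(n+1)}`, i.e. `larssonKernelIter a b T 0 = m_T^{(1)} = m_T`
and `m_T^{(n+1)}(x,y) = ∫_T m_T^{(n)}(x,z) m_T(z,y) dz`. -/
noncomputable def larssonKernelIter (a b : ℝ) (T : Set ℝ) : ℕ → ℝ → ℝ → ℝ
  | 0 => larssonKernel a b T
  | (n + 1) => fun x y => ∫ z in T, larssonKernelIter a b T n x z * larssonKernel a b T z y

/-!
Put `t = (1 - 3a - 2b)/2` and `d = 1/2 + a/2 - b`. The kernel `m_T` is positive at `(x, y)`, `y ∈ T`,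
as soon as `x` is within `t` of one of the points `φ_k(y) = a y + d k`, `k ∈ {-1, 0, 1}`. Since
`3a < 1`, the `l`-th approximation `T` of the attractor of the contractions `φ_k`, started from
`[-3d/2, 3d/2]`, consists of `3 ^ l` disjoint intervals, and it is *exactly* the closed
`s`-neighbourhood of `⋃ₖ φ_k(T)` for `s = a ^ l · d (1 - 3a)/2`, which is below `t` for `l` large.

For such a set `T`, let `w ∈ T` be a point near which `m_T^{(n)}(x, ·)` is positive. There are
`k` and `y' ∈ T` with `φ_k(y')` within `s` of `w`. Moving `y'` to `y` moves `φ_k(y')`, and the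
corresponding translate of `w` stays in `T`, by at most `a |y - y'|`. Each iteration therefore
multiplies the radius of the neighbourhood on which positivity is known by `1 / a`, until that
neighbourhood exhausts `T`.
-/

open Filter Metric Set Topology
open scoped NNReal

lemma exists_pow_mul_lt {r : ℝ} (hr₀ : 0 ≤ r) (hr₁ : r < 1) (C : ℝ) {ε : ℝ} (hε : 0 < ε) :
    ∃ n : ℕ, r ^ n * C < ε := by
  have h := (tendsto_pow_atTop_nhds_zero_of_lt_one hr₀ hr₁).mul_const C
  rw [zero_mul] at h
  exact (h.eventually_lt_const hε).exists

lemma exists_Ioo_subset_closedBall_inter_ball {v r y ε : ℝ} (hy : y ∈ closedBall v r)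
    (hε : ε ≤ r) : ∃ u, Ioo u (u + ε) ⊆ closedBall v r ∩ ball y ε := by
  rw [Real.closedBall_eq_Icc, mem_Icc] at hy
  simp only [Real.closedBall_eq_Icc, Real.ball_eq_Ioo]
  rcases le_total y v with h | h
  · exact ⟨y, fun z hz =>
      ⟨⟨by linarith [hz.1], by linarith [hz.2]⟩, by linarith [hz.1, hz.2], hz.2⟩⟩
  · exact ⟨y - ε, fun z hz =>
      ⟨⟨by linarith [hz.1], by linarith [hz.2]⟩, hz.1, by linarith [hz.1, hz.2]⟩⟩

/-! ### Iterated kernels -/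

section IteratedKernel

/-- The iterates of the kernel `K` with respect to `μ`. As for `larssonKernelIter`, the index is
shifted by one: `iteratedKernel μ K n` is the `(n + 1)`-st iterate. -/
noncomputable def iteratedKernel {X : Type*} [MeasurableSpace X] (μ : Measure X) (K : X → X → ℝ) :
    ℕ → X → X → ℝ
  | 0 => K
  | (n + 1) => fun x y => ∫ z, iteratedKernel μ K n x z * K z y ∂μ

lemma larssonKernelIter_eq_iteratedKernel (a b : ℝ) (T : Set ℝ) (n : ℕ) :
    larssonKernelIter a b T n = iteratedKernel (volume.restrict T) (larssonKernel a b T) n := by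
  induction n with
  | zero => rfl
  | succ n ih => simp only [larssonKernelIter, iteratedKernel, ih]

variable {X : Type*} [MeasurableSpace X] {μ : Measure X} {K : X → X → ℝ} {C : ℝ}

lemma iteratedKernel_nonneg (hK₀ : ∀ x y, 0 ≤ K x y) (n : ℕ) (x y : X) :
    0 ≤ iteratedKernel μ K n x y := by
  induction n generalizing y with
  | zero => exact hK₀ x y
  | succ n ih => exact integral_nonneg fun z => mul_nonneg (ih z) (hK₀ z y)

lemma measurable_iteratedKernel [SFinite μ] (hK : Measurable (Function.uncurry K)) (n : ℕ) :
    Measurable (Function.uncurry (iteratedKernel μ K n)) := by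
  induction n with
  | zero => exact hK
  | succ n ih =>
    have h : Measurable (Function.uncurry fun (p : X × X) (z : X) =>
        iteratedKernel μ K n p.1 z * K z p.2) :=
      (ih.comp (measurable_fst.fst.prodMk measurable_snd)).mul
        (hK.comp (measurable_snd.prodMk measurable_fst.snd))
    exact h.stronglyMeasurable.integral_prod_right.measurable

variable [IsFiniteMeasure μ]

lemma norm_iteratedKernel_le (hKC : ∀ x y, ‖K x y‖ ≤ C) (n : ℕ) (x y : X) :
    ‖iteratedKernel μ K n x y‖ ≤ C * (C * μ.real univ) ^ n := by
  induction n generalizing y with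
  | zero => simpa [iteratedKernel] using hKC x y
  | succ n ih =>
    have hbound : ∀ z, ‖iteratedKernel μ K n x z * K z y‖ ≤ C * (C * μ.real univ) ^ n * C :=
      fun z => norm_mul_le_of_le (ih z) (hKC z y)
    calc ‖iteratedKernel μ K (n + 1) x y‖ ≤ C * (C * μ.real univ) ^ n * C * μ.real univ :=
          norm_integral_le_of_norm_le_const (.of_forall hbound)
      _ = C * (C * μ.real univ) ^ (n + 1) := by ring

lemma integrable_iteratedKernel_mul (hK : Measurable (Function.uncurry K))
    (hKC : ∀ x y, ‖K x y‖ ≤ C) (n : ℕ) (x y : X) :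
    Integrable (fun z => iteratedKernel μ K n x z * K z y) μ :=
  .of_bound
    ((measurable_iteratedKernel hK n).of_uncurry_left.mul hK.of_uncurry_right).aestronglyMeasurable
    (C * (C * μ.real univ) ^ n * C)
    (.of_forall fun z => norm_mul_le_of_le (norm_iteratedKernel_le hKC n x z) (hKC z y))

lemma iteratedKernel_succ_pos (hK : Measurable (Function.uncurry K)) (hK₀ : ∀ x y, 0 ≤ K x y)
    (hKC : ∀ x y, ‖K x y‖ ≤ C) {n : ℕ} {x y : X} {A : Set X} (hA : 0 < μ A)
    (hpos : ∀ z ∈ A, 0 < iteratedKernel μ K n x z ∧ 0 < K z y) :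
    0 < iteratedKernel μ K (n + 1) x y := by
  refine (integral_pos_iff_support_of_nonneg
    (fun z => mul_nonneg (iteratedKernel_nonneg hK₀ n x z) (hK₀ z y))
    (integrable_iteratedKernel_mul hK hKC n x y)).2 (hA.trans_le (measure_mono fun z hz => ?_))
  exact (mul_pos (hpos z hz).1 (hpos z hz).2).ne'

end IteratedKernel

section Contractions

variable {E ι : Type*} [SeminormedAddCommGroup E] {φ : ι → E → E} {ρ : ℝ≥0} {s t : ℝ} {T : Set E}

lemma exists_mem_dist_map_le_and_dist_le (hφ : ∀ k, LipschitzWith ρ (φ k))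
    (hT : ∀ k, ∀ y ∈ T, closedBall (φ k y) s ⊆ T) {w y y' : E} {k : ι} (hy : y ∈ T)
    (hw : dist w (φ k y') ≤ s) :
    ∃ z ∈ T, dist z (φ k y) ≤ s ∧ dist z w ≤ ρ * dist y y' := by
  have hdist : dist (φ k y + (w - φ k y')) (φ k y) ≤ s := by
    simpa [dist_eq_norm] using hw
  refine ⟨φ k y + (w - φ k y'), hT k y hy hdist, hdist, ?_⟩
  calc dist (φ k y + (w - φ k y')) w = dist (φ k y) (φ k y') := by
        rw [dist_eq_norm, dist_eq_norm]; congr 1; abel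
    _ ≤ ρ * dist y y' := (hφ k).dist_le_mul y y'

variable [MeasurableSpace E] {μ : Measure E} [IsFiniteMeasure μ] {K : E → E → ℝ} {C : ℝ}

lemma exists_forall_dist_lt_iteratedKernel_pos (hφ : ∀ k, LipschitzWith ρ (φ k))
    (hT : ∀ x, x ∈ T ↔ ∃ k, ∃ y ∈ T, dist x (φ k y) ≤ s)
    (hμ : ∀ y ∈ T, ∀ U ∈ 𝓝 y, 0 < μ (U ∩ T))
    (hK : Measurable (Function.uncurry K)) (hK₀ : ∀ x y, 0 ≤ K x y) (hKC : ∀ x y, ‖K x y‖ ≤ C)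
    (hKpos : ∀ k x, ∀ y ∈ T, dist x (φ k y) < t → 0 < K x y) (n : ℕ) {x : E} (hx : x ∈ T) :
    ∃ w ∈ T, ∀ y ∈ T, ρ ^ (n + 1) * dist y w < t - s → 0 < iteratedKernel μ K n x y := by
  induction n with
  | zero =>
    obtain ⟨k, w, hw, hxw⟩ := (hT x).1 hx
    refine ⟨w, hw, fun y hy hyw => hKpos k x y hy ?_⟩
    have hφyw := (hφ k).dist_le_mul w y
    rw [zero_add, pow_one, dist_comm] at hyw
    linarith [dist_triangle x (φ k w) (φ k y)]
  | succ n ih =>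
    obtain ⟨w, hw, hpos⟩ := ih
    obtain ⟨k, w', hw', hww'⟩ := (hT w).1 hw
    refine ⟨w', hw', fun y hy hyw' => ?_⟩
    obtain ⟨z₀, hz₀, hz₀y, hz₀w⟩ := exists_mem_dist_map_le_and_dist_le hφ
      (fun k y hy x hx => (hT x).2 ⟨k, y, hy, hx⟩) hy hww'
    have hz₀_lt : ρ ^ (n + 1) * dist z₀ w < t - s :=
      calc (ρ : ℝ) ^ (n + 1) * dist z₀ w ≤ ρ ^ (n + 1) * (ρ * dist y w') := by gcongr
        _ = ρ ^ (n + 1 + 1) * dist y w' := by ring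
        _ < t - s := hyw'
    have hst : s < t := by
      have : 0 ≤ (ρ : ℝ) ^ (n + 1) * dist z₀ w := by positivity
      linarith
    have hU : {z | ρ ^ (n + 1) * dist z w < t - s ∧ dist z (φ k y) < t} ∈ 𝓝 z₀ :=
      ((by fun_prop : Continuous fun z => ρ ^ (n + 1) * dist z w).tendsto z₀
        |>.eventually_lt_const hz₀_lt).and
      ((by fun_prop : Continuous fun z => dist z (φ k y)).tendsto z₀
        |>.eventually_lt_const (hz₀y.trans_lt hst))
    exact iteratedKernel_succ_pos hK hK₀ hKC (hμ z₀ hz₀ _ hU) fun z hz =>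
      ⟨hpos z hz.2 hz.1.1, hKpos k z y hy hz.1.2⟩

theorem exists_forall_iteratedKernel_pos (hρ : ρ < 1) (hst : s < t) (hTb : Bornology.IsBounded T)
    (hφ : ∀ k, LipschitzWith ρ (φ k)) (hT : ∀ x, x ∈ T ↔ ∃ k, ∃ y ∈ T, dist x (φ k y) ≤ s)
    (hμ : ∀ y ∈ T, ∀ U ∈ 𝓝 y, 0 < μ (U ∩ T))
    (hK : Measurable (Function.uncurry K)) (hK₀ : ∀ x y, 0 ≤ K x y) (hKC : ∀ x y, ‖K x y‖ ≤ C)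
    (hKpos : ∀ k x, ∀ y ∈ T, dist x (φ k y) < t → 0 < K x y) :
    ∃ n : ℕ, ∀ x ∈ T, ∀ y ∈ T, 0 < iteratedKernel μ K n x y := by
  obtain ⟨n, hn⟩ := exists_pow_mul_lt ρ.coe_nonneg (mod_cast hρ) (diam T) (sub_pos.2 hst)
  refine ⟨n, fun x hx y hy => ?_⟩
  obtain ⟨w, hw, hpos⟩ :=
    exists_forall_dist_lt_iteratedKernel_pos hφ hT hμ hK hK₀ hKC hKpos n hx
  refine hpos y hy (lt_of_le_of_lt ?_ hn)
  exact mul_le_mul (pow_le_pow_of_le_one ρ.coe_nonneg (mod_cast hρ.le) n.le_succ)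
    (dist_le_diam_of_mem hTb hy hw) dist_nonneg (by positivity)

end Contractions

/-! ### The approximations of a three-branch Cantor set -/

section Cantor

/-- The branches `y ↦ a y + d k`, `k ∈ {-1, 0, 1}`, of the iterated function system behind
`larssonKernel`; the index set `{-1, 0, 1}` is encoded as `SignType`. -/
def branchMap (a d : ℝ) (k : SignType) (y : ℝ) : ℝ := a * y + d * k

/-- The image of `0` under `branchMap a d (σ 0) ∘ ⋯ ∘ branchMap a d (σ (l - 1))`. -/
def branchCenter (a d : ℝ) {l : ℕ} (σ : Fin l → SignType) : ℝ :=
  ∑ i : Fin l, a ^ (i : ℕ) * (d * σ i)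

/-- The cylinder of the word `σ`: the image of `[-3d/2, 3d/2]` under
`branchMap a d (σ 0) ∘ ⋯ ∘ branchMap a d (σ (l - 1))`. -/
def branchCylinder (a d : ℝ) {l : ℕ} (σ : Fin l → SignType) : Set ℝ :=
  closedBall (branchCenter a d σ) (a ^ l * (3 * d / 2))

/-- The `l`-th approximation of the attractor of the maps `branchMap a d k`, started from
`[-3d/2, 3d/2]`. -/
def cantorLevel (a d : ℝ) (l : ℕ) : Set ℝ := ⋃ σ : Fin l → SignType, branchCylinder a d σ

variable {a d : ℝ} {l : ℕ}

lemma dist_branchMap (a d : ℝ) (k : SignType) (y z : ℝ) :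
    dist (branchMap a d k y) (branchMap a d k z) = |a| * dist y z := by
  rw [Real.dist_eq, Real.dist_eq, ← abs_mul]
  simp only [branchMap]
  ring_nf

lemma lipschitzWith_branchMap (a d : ℝ) (k : SignType) : LipschitzWith ‖a‖₊ (branchMap a d k) :=
  .of_dist_le_mul fun y z => (dist_branchMap a d k y z).le

lemma branchMap_surjective (ha : a ≠ 0) (d : ℝ) (k : SignType) :
    Function.Surjective (branchMap a d k) := fun x =>
  ⟨(x - d * k) / a, by simp only [branchMap]; field_simp; ring⟩

lemma abs_branchMap_le (ha : 0 ≤ a) (hd : 0 ≤ d) (k : SignType) (y : ℝ) :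
    |branchMap a d k y| ≤ a * |y| + d := by
  have hk : |(k : ℝ)| ≤ 1 := by cases k <;> simp
  calc |branchMap a d k y| ≤ |a * y| + |d * k| := abs_add_le _ _
    _ = a * |y| + d * |(k : ℝ)| := by rw [abs_mul, abs_mul, abs_of_nonneg ha, abs_of_nonneg hd]
    _ ≤ a * |y| + d := by linarith [mul_le_of_le_one_right hd hk]

lemma index_eq_of_branchMap_eq (ha : 0 ≤ a) (ha₃ : 3 * a < 1) (hd : 0 < d) {j k : SignType}
    {y z : ℝ} (hy : |y| ≤ 3 * d / 2) (hz : |z| ≤ 3 * d / 2)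
    (h : branchMap a d j y = branchMap a d k z) : j = k := by
  by_contra hjk
  have hsep : 1 ≤ |(j : ℝ) - k| := by cases j <;> cases k <;> simp_all <;> norm_num
  have hshift : d * ((j : ℝ) - k) = a * (z - y) := by
    simp only [branchMap] at h
    linarith
  have : d < d :=
    calc d ≤ d * |(j : ℝ) - k| := le_mul_of_one_le_right hd.le hsep
      _ = a * |z - y| := by rw [← abs_of_pos hd, ← abs_mul, hshift, abs_mul, abs_of_nonneg ha]
      _ ≤ a * (3 * d) := by gcongr; linarith [abs_sub z y]
      _ < d := by nlinarith
  exact this.false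

lemma branchCenter_succ (a d : ℝ) (σ : Fin (l + 1) → SignType) :
    branchCenter a d σ = branchMap a d (σ 0) (branchCenter a d (Fin.tail σ)) := by
  simp only [branchCenter, branchMap, Fin.sum_univ_succ, Finset.mul_sum, Fin.tail, Fin.val_zero,
    Fin.val_succ, pow_zero, pow_succ', mul_assoc, one_mul]
  exact add_comm _ _

lemma branchMap_mem_branchCylinder_iff (ha : 0 < a) (d : ℝ) (σ : Fin (l + 1) → SignType) (y : ℝ) :
    branchMap a d (σ 0) y ∈ branchCylinder a d σ ↔ y ∈ branchCylinder a d (Fin.tail σ) := by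
  rw [branchCylinder, branchCylinder, mem_closedBall, mem_closedBall, branchCenter_succ,
    dist_branchMap, abs_of_pos ha, pow_succ', mul_assoc, mul_le_mul_iff_right₀ ha]

lemma mem_cantorLevel_zero {x : ℝ} : x ∈ cantorLevel a d 0 ↔ |x| ≤ 3 * d / 2 := by
  simp [cantorLevel, branchCylinder, branchCenter]

lemma mem_cantorLevel_succ (ha : 0 < a) {x : ℝ} :
    x ∈ cantorLevel a d (l + 1) ↔ ∃ k, ∃ y ∈ cantorLevel a d l, branchMap a d k y = x := by
  simp only [cantorLevel, mem_iUnion]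
  constructor
  · rintro ⟨σ, hσ⟩
    obtain ⟨y, rfl⟩ := branchMap_surjective ha.ne' d (σ 0) x
    exact ⟨σ 0, y, ⟨Fin.tail σ, (branchMap_mem_branchCylinder_iff ha d σ y).1 hσ⟩, rfl⟩
  · rintro ⟨k, y, ⟨σ, hσ⟩, rfl⟩
    exact ⟨Fin.cons k σ, (branchMap_mem_branchCylinder_iff ha d (Fin.cons k σ) y).2 hσ⟩

lemma isCompact_cantorLevel (a d : ℝ) (l : ℕ) : IsCompact (cantorLevel a d l) :=
  isCompact_iUnion fun _ => isCompact_closedBall _ _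

lemma zero_mem_interior_cantorLevel (ha : 0 < a) (hd : 0 < d) (l : ℕ) :
    0 ∈ interior (cantorLevel a d l) := by
  have hcenter : branchCenter a d (0 : Fin l → SignType) = 0 := by simp [branchCenter]
  have hsub : closedBall 0 (a ^ l * (3 * d / 2)) ⊆ cantorLevel a d l := by
    rw [← hcenter]
    exact subset_iUnion (fun σ : Fin l → SignType => branchCylinder a d σ) 0
  exact mem_interior_iff_mem_nhds.2
    (mem_of_superset (closedBall_mem_nhds 0 (by positivity)) hsub)

lemma exists_Ioo_subset_cantorLevel_inter_ball {y ε : ℝ} (hy : y ∈ cantorLevel a d l)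
    (hε : ε ≤ a ^ l * (3 * d / 2)) : ∃ u, Ioo u (u + ε) ⊆ cantorLevel a d l ∩ ball y ε := by
  obtain ⟨σ, hσ⟩ := mem_iUnion.1 hy
  obtain ⟨u, hu⟩ := exists_Ioo_subset_closedBall_inter_ball hσ hε
  exact ⟨u, hu.trans (inter_subset_inter_left _
    (subset_iUnion (fun σ : Fin l → SignType => branchCylinder a d σ) σ))⟩

lemma volume_inter_cantorLevel_pos (ha : 0 < a) (hd : 0 < d) {y : ℝ} (hy : y ∈ cantorLevel a d l)
    {U : Set ℝ} (hU : U ∈ 𝓝 y) : 0 < volume (U ∩ cantorLevel a d l) := by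
  obtain ⟨ε, hε, hεU⟩ := Metric.mem_nhds_iff.1 hU
  set η := min ε (a ^ l * (3 * d / 2))
  have hη : 0 < η := lt_min hε (by positivity)
  obtain ⟨u, hu⟩ := exists_Ioo_subset_cantorLevel_inter_ball hy (min_le_right ε _)
  have hsub : Ioo u (u + η) ⊆ U ∩ cantorLevel a d l := fun z hz =>
    ⟨hεU (ball_subset_ball (min_le_left _ _) (hu hz).2), (hu hz).1⟩
  refine lt_of_lt_of_le ?_ (measure_mono hsub)
  simpa using hη

lemma one_sub_mul_abs_le_of_mem_cantorLevel (ha : 0 < a) (ha₁ : a ≤ 1) (hd : 0 ≤ d) {x : ℝ}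
    (hx : x ∈ cantorLevel a d l) : (1 - a) * |x| ≤ d + a ^ l * (d * (1 - 3 * a) / 2) := by
  induction l generalizing x with
  | zero =>
    have h := mul_le_mul_of_nonneg_left (mem_cantorLevel_zero.1 hx) (sub_nonneg.2 ha₁)
    linarith
  | succ l ih =>
    obtain ⟨k, y, hy, rfl⟩ := (mem_cantorLevel_succ ha).1 hx
    calc (1 - a) * |branchMap a d k y| ≤ (1 - a) * (a * |y| + d) :=
          mul_le_mul_of_nonneg_left (abs_branchMap_le ha.le hd k y) (sub_nonneg.2 ha₁)
      _ = a * ((1 - a) * |y|) + (1 - a) * d := by ring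
      _ ≤ a * (d + a ^ l * (d * (1 - 3 * a) / 2)) + (1 - a) * d := by gcongr; exact ih hy
      _ = d + a ^ (l + 1) * (d * (1 - 3 * a) / 2) := by ring

lemma abs_le_of_mem_cantorLevel (ha : 0 < a) (ha₃ : 3 * a < 1) (hd : 0 ≤ d) {x : ℝ}
    (hx : x ∈ cantorLevel a d l) : |x| ≤ 3 * d / 2 := by
  have hbound := one_sub_mul_abs_le_of_mem_cantorLevel ha (by linarith) hd hx
  have hpow : a ^ l * (d * (1 - 3 * a) / 2) ≤ d * (1 - 3 * a) / 2 :=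
    mul_le_of_le_one_left (by nlinarith) (pow_le_one₀ ha.le (by linarith))
  nlinarith

lemma eq_of_mem_branchCylinder (ha : 0 < a) (ha₃ : 3 * a < 1) (hd : 0 < d)
    {σ τ : Fin l → SignType} {x : ℝ} (hσ : x ∈ branchCylinder a d σ)
    (hτ : x ∈ branchCylinder a d τ) : σ = τ := by
  induction l generalizing x with
  | zero => exact Subsingleton.elim σ τ
  | succ l ih =>
    obtain ⟨y, rfl⟩ := branchMap_surjective ha.ne' d (σ 0) x
    obtain ⟨z, hz⟩ := branchMap_surjective ha.ne' d (τ 0) (branchMap a d (σ 0) y)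
    rw [branchMap_mem_branchCylinder_iff ha] at hσ
    rw [← hz, branchMap_mem_branchCylinder_iff ha] at hτ
    have hhead : τ 0 = σ 0 := index_eq_of_branchMap_eq ha.le ha₃ hd
      (abs_le_of_mem_cantorLevel ha ha₃ hd.le (mem_iUnion.2 ⟨_, hτ⟩))
      (abs_le_of_mem_cantorLevel ha ha₃ hd.le (mem_iUnion.2 ⟨_, hσ⟩)) hz
    have hyz : z = y := by
      rw [hhead] at hz
      simpa [branchMap, ha.ne'] using hz
    rw [hyz] at hτ
    rw [← Fin.cons_self_tail σ, ← Fin.cons_self_tail τ, hhead, ih hσ hτ]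

lemma exists_abs_sub_mul_signType_le {x : ℝ} (hx : |x| ≤ 3 * d / 2) :
    ∃ k : SignType, |x - d * k| ≤ d / 2 := by
  simp only [abs_le] at hx ⊢
  rcases lt_or_ge x (-d / 2) with hneg | hneg
  · exact ⟨-1, by rw [SignType.coe_neg_one]; constructor <;> linarith⟩
  rcases le_or_gt x (d / 2) with hpos | hpos
  · exact ⟨0, by rw [SignType.coe_zero]; constructor <;> linarith⟩
  · exact ⟨1, by rw [SignType.coe_one]; constructor <;> linarith⟩

lemma mem_cantorLevel_zero_iff_exists_dist_branchMap_le (ha : 0 ≤ a) (ha₃ : 3 * a ≤ 1)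
    (hd : 0 ≤ d) {x : ℝ} :
    x ∈ cantorLevel a d 0 ↔
      ∃ k, ∃ y ∈ cantorLevel a d 0, dist x (branchMap a d k y) ≤ d * (1 - 3 * a) / 2 := by
  simp only [mem_cantorLevel_zero]
  constructor
  · intro hx
    obtain ⟨k, hk⟩ := exists_abs_sub_mul_signType_le hx
    refine ⟨k, 3 * (x - d * k), ?_, ?_⟩
    · rw [abs_mul, abs_of_pos three_pos]
      linarith
    · have hsub : x - branchMap a d k (3 * (x - d * k)) = (1 - 3 * a) * (x - d * k) := by
        simp only [branchMap]
        ring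
      rw [Real.dist_eq, hsub, abs_mul, abs_of_nonneg (sub_nonneg.2 ha₃)]
      linarith [mul_le_mul_of_nonneg_left hk (sub_nonneg.2 ha₃)]
  · rintro ⟨k, y, hy, hxy⟩
    rw [Real.dist_eq] at hxy
    have hx := abs_sub_abs_le_abs_sub x (branchMap a d k y)
    have hφ := abs_branchMap_le ha hd k y
    have hay := mul_le_mul_of_nonneg_left hy ha
    linarith

lemma mem_cantorLevel_iff_exists_dist_branchMap_le (ha : 0 < a) (ha₃ : 3 * a ≤ 1) (hd : 0 ≤ d)
    (l : ℕ) (x : ℝ) :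
    x ∈ cantorLevel a d l ↔
      ∃ k, ∃ y ∈ cantorLevel a d l,
        dist x (branchMap a d k y) ≤ a ^ l * (d * (1 - 3 * a) / 2) := by
  induction l generalizing x with
  | zero =>
    rw [pow_zero, one_mul]
    exact mem_cantorLevel_zero_iff_exists_dist_branchMap_le ha.le ha₃ hd
  | succ l ih =>
    have hscale (k : SignType) (y z : ℝ) :
        dist (branchMap a d k y) (branchMap a d k z) ≤ a ^ (l + 1) * (d * (1 - 3 * a) / 2) ↔
          dist y z ≤ a ^ l * (d * (1 - 3 * a) / 2) := by
      rw [dist_branchMap, abs_of_pos ha, pow_succ', mul_assoc, mul_le_mul_iff_right₀ ha]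
    constructor
    · intro hx
      obtain ⟨k, y, hy, rfl⟩ := (mem_cantorLevel_succ ha).1 hx
      obtain ⟨j, z, hz, hyz⟩ := (ih y).1 hy
      exact ⟨k, branchMap a d j z, (mem_cantorLevel_succ ha).2 ⟨j, z, hz, rfl⟩,
        (hscale k _ _).2 hyz⟩
    · rintro ⟨k, y, hy, hxy⟩
      obtain ⟨j, z, hz, rfl⟩ := (mem_cantorLevel_succ ha).1 hy
      obtain ⟨x, rfl⟩ := branchMap_surjective ha.ne' d k x
      exact (mem_cantorLevel_succ ha).2
        ⟨k, x, (ih x).2 ⟨j, z, hz, (hscale k _ _).1 hxy⟩, rfl⟩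

lemma exists_cantorLevel_eq_iUnion_Icc (ha : 0 < a) (ha₃ : 3 * a < 1) (hd : 0 < d) (l : ℕ) :
    ∃ α : Fin (3 ^ l) → ℝ,
      cantorLevel a d l = ⋃ i, Icc (α i) (α i + 3 * (a ^ l * d)) ∧
      ∀ i j, i ≠ j →
        Disjoint (Icc (α i) (α i + 3 * (a ^ l * d))) (Icc (α j) (α j + 3 * (a ^ l * d))) := by
  have hcard : Fintype.card (Fin l → SignType) = 3 ^ l := by
    rw [Fintype.card_fun, Fintype.card_fin]; rfl
  let e := (Fintype.equivFinOfCardEq hcard).symm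
  have hIcc (σ : Fin l → SignType) : branchCylinder a d σ =
      Icc (branchCenter a d σ - a ^ l * (3 * d / 2))
        (branchCenter a d σ - a ^ l * (3 * d / 2) + 3 * (a ^ l * d)) := by
    rw [branchCylinder, Real.closedBall_eq_Icc]
    ring_nf
  refine ⟨fun i => branchCenter a d (e i) - a ^ l * (3 * d / 2), ?_, fun i j hij => ?_⟩
  · simp only [← hIcc, cantorLevel]
    exact (e.surjective.iUnion_comp fun σ => branchCylinder a d σ).symm
  · simp only [← hIcc]
    exact disjoint_left.2 fun x hi hj =>
      hij (e.injective (eq_of_mem_branchCylinder ha ha₃ hd hi hj))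

end Cantor

/-! ### The kernel `m_T` -/

section LarssonKernel

lemma triangularDensity_nonneg (t z : ℝ) : 0 ≤ triangularDensity t z := by
  unfold triangularDensity
  split_ifs with h
  · exact div_nonneg (sub_nonneg.2 h) (sq_nonneg t)
  · exact le_rfl

lemma triangularDensity_pos {t z : ℝ} (h : |z| < t) : 0 < triangularDensity t z := by
  have ht : 0 < t := (abs_nonneg z).trans_lt h
  rw [triangularDensity, if_pos h.le]
  exact div_pos (sub_pos.2 h) (by positivity)

lemma triangularDensity_le_inv {t : ℝ} (ht : 0 < t) (z : ℝ) : triangularDensity t z ≤ t⁻¹ := by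
  unfold triangularDensity
  split_ifs
  · rw [div_le_iff₀ (by positivity), sq, inv_mul_cancel_left₀ ht.ne']
    linarith [abs_nonneg z]
  · positivity

@[fun_prop]
lemma measurable_triangularDensity (t : ℝ) : Measurable (triangularDensity t) :=
  .ite (measurableSet_le (by fun_prop) (by fun_prop)) (by fun_prop) (by fun_prop)

/-- The half-width `t` of the triangular densities in `larssonKernel`. -/
noncomputable def larssonWidth (a b : ℝ) : ℝ := (1 - 3 * a - 2 * b) / 2

/-- The distance `d` between the centres of consecutive triangular densities in `larssonKernel`. -/
noncomputable def larssonShift (a b : ℝ) : ℝ := 1 / 2 + a / 2 - b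

variable {a b : ℝ} {T : Set ℝ}

lemma larssonKernel_eq (a b : ℝ) (T : Set ℝ) (x y : ℝ) :
    larssonKernel a b T x y =
      (a * triangularDensity (larssonWidth a b) (branchMap a (larssonShift a b) 1 y - x) +
        2 * a * triangularDensity (larssonWidth a b) (branchMap a (larssonShift a b) 0 y - x) +
        a * triangularDensity (larssonWidth a b) (branchMap a (larssonShift a b) (-1) y - x)) *
      T.indicator (fun _ => (1 : ℝ)) y := by
  simp only [larssonKernel, larssonWidth, larssonShift, branchMap, SignType.coe_one,
    SignType.coe_zero, SignType.coe_neg_one]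
  ring_nf

lemma larssonKernel_nonneg (ha : 0 ≤ a) (x y : ℝ) : 0 ≤ larssonKernel a b T x y := by
  have hf := triangularDensity_nonneg (larssonWidth a b)
  have hT : 0 ≤ T.indicator (fun _ => (1 : ℝ)) y := indicator_nonneg (fun _ _ => zero_le_one) y
  rw [larssonKernel_eq]
  have := hf (branchMap a (larssonShift a b) 1 y - x)
  have := hf (branchMap a (larssonShift a b) 0 y - x)
  have := hf (branchMap a (larssonShift a b) (-1) y - x)
  positivity

lemma norm_larssonKernel_le (ha : 0 ≤ a) (ht : 0 < larssonWidth a b) (x y : ℝ) :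
    ‖larssonKernel a b T x y‖ ≤ 4 * a * (larssonWidth a b)⁻¹ := by
  have hf := triangularDensity_le_inv ht
  have hT₀ : 0 ≤ T.indicator (fun _ => (1 : ℝ)) y := indicator_nonneg (fun _ _ => zero_le_one) y
  have hT₁ : T.indicator (fun _ => (1 : ℝ)) y ≤ 1 :=
    indicator_le_self' (fun _ _ => zero_le_one) y
  rw [Real.norm_of_nonneg (larssonKernel_nonneg ha x y), larssonKernel_eq]
  calc _ ≤ (a * (larssonWidth a b)⁻¹ + 2 * a * (larssonWidth a b)⁻¹
          + a * (larssonWidth a b)⁻¹) * 1 := by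
        gcongr <;> exact hf _
    _ = 4 * a * (larssonWidth a b)⁻¹ := by ring

lemma measurable_larssonKernel (a b : ℝ) (hT : MeasurableSet T) :
    Measurable (Function.uncurry (larssonKernel a b T)) := by
  have hind : Measurable (T.indicator fun _ => (1 : ℝ)) := measurable_const.indicator hT
  unfold Function.uncurry larssonKernel
  exact .mul (by fun_prop) (hind.comp measurable_snd)

lemma larssonKernel_pos (ha : 0 < a) {k : SignType} {x y : ℝ} (hy : y ∈ T)
    (h : dist x (branchMap a (larssonShift a b) k y) < larssonWidth a b) :
    0 < larssonKernel a b T x y := by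
  have hf := triangularDensity_nonneg (larssonWidth a b)
  have hleft := mul_nonneg ha.le (hf (branchMap a (larssonShift a b) 1 y - x))
  have hmid := mul_nonneg ha.le (hf (branchMap a (larssonShift a b) 0 y - x))
  have hright := mul_nonneg ha.le (hf (branchMap a (larssonShift a b) (-1) y - x))
  rw [dist_comm, Real.dist_eq] at h
  have hpos := mul_pos ha (triangularDensity_pos h)
  rw [larssonKernel_eq, indicator_of_mem hy, mul_one]
  rcases k.trichotomy with rfl | rfl | rfl <;> linarith

variable {l : ℕ}

lemma exists_Ioo_subset_larssonKernel_pos (ha : 0 < a) (ha₃ : 3 * a ≤ 1)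
    (hd : 0 < larssonShift a b)
    (hl : a ^ l * (larssonShift a b * (1 - 3 * a) / 2) < larssonWidth a b) :
    ∃ κ > 0, ∀ x ∈ cantorLevel a (larssonShift a b) l, ∃ u, Ioo u (u + κ) ⊆
      {y | 0 < larssonKernel a b (cantorLevel a (larssonShift a b) l) x y} := by
  set s := a ^ l * (larssonShift a b * (1 - 3 * a) / 2)
  refine ⟨min (larssonWidth a b - s) (a ^ l * (3 * larssonShift a b / 2)),
    lt_min (sub_pos.2 hl) (by positivity), fun x hx => ?_⟩
  obtain ⟨k, y, hy, hxy⟩ :=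
    (mem_cantorLevel_iff_exists_dist_branchMap_le ha ha₃ hd.le l x).1 hx
  obtain ⟨u, hu⟩ := exists_Ioo_subset_cantorLevel_inter_ball hy (min_le_right _ _)
  refine ⟨u, fun z hz => larssonKernel_pos (k := k) ha (hu hz).1 ?_⟩
  have hyz : dist y z < larssonWidth a b - s :=
    (mem_ball'.1 (hu hz).2).trans_le (min_le_left _ _)
  calc dist x (branchMap a (larssonShift a b) k z)
      ≤ dist x (branchMap a (larssonShift a b) k y) + a * dist y z := by
        rw [← abs_of_pos ha, ← dist_branchMap a (larssonShift a b) k, abs_of_pos ha]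
        exact dist_triangle _ _ _
    _ ≤ s + dist y z := add_le_add hxy (mul_le_of_le_one_left dist_nonneg (by linarith))
    _ < larssonWidth a b := by linarith

lemma exists_larssonKernelIter_pos (ha : 0 < a) (ha₃ : 3 * a ≤ 1) (hd : 0 < larssonShift a b)
    (hl : a ^ l * (larssonShift a b * (1 - 3 * a) / 2) < larssonWidth a b) :
    ∃ n, ∀ x ∈ cantorLevel a (larssonShift a b) l, ∀ y ∈ cantorLevel a (larssonShift a b) l,
      0 < larssonKernelIter a b (cantorLevel a (larssonShift a b) l) n x y := by
  have hcpt := isCompact_cantorLevel a (larssonShift a b) l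
  have : IsFiniteMeasure (volume.restrict (cantorLevel a (larssonShift a b) l)) :=
    isFiniteMeasure_restrict.2 hcpt.measure_ne_top
  have ha_norm : ‖a‖₊ < 1 := by
    rw [← NNReal.coe_lt_one, coe_nnnorm, Real.norm_of_nonneg ha.le]
    linarith
  have ht : 0 < larssonWidth a b := by
    have : 0 ≤ 1 - 3 * a := sub_nonneg.2 ha₃
    exact lt_of_le_of_lt (by positivity) hl
  simp only [larssonKernelIter_eq_iteratedKernel]
  refine exists_forall_iteratedKernel_pos ha_norm hl hcpt.isBounded
    (lipschitzWith_branchMap a (larssonShift a b))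
    (mem_cantorLevel_iff_exists_dist_branchMap_le ha ha₃ hd.le l) (fun y hy U hU => ?_)
    (measurable_larssonKernel a b hcpt.measurableSet) (larssonKernel_nonneg ha.le)
    (norm_larssonKernel_le ha.le ht) (fun k x y => larssonKernel_pos ha)
  rw [Measure.restrict_apply' hcpt.measurableSet, inter_assoc, inter_self]
  exact volume_inter_cantorLevel_pos ha hd hy hU

lemma cantorLevel_subset_Ioo (ha : 0 < a) (ha₁ : a < 1) (hd : 0 ≤ larssonShift a b)
    (hl : a ^ l * (larssonShift a b * (1 - 3 * a) / 2) < larssonWidth a b) :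
    cantorLevel a (larssonShift a b) l ⊆ Ioo (-1 + 2 * b / (1 - a)) (1 - 2 * b / (1 - a)) := by
  have h1a : 0 < 1 - a := sub_pos.2 ha₁
  intro x hx
  have hsum : larssonShift a b + larssonWidth a b = (1 - a) * (1 - 2 * b / (1 - a)) := by
    simp only [larssonShift, larssonWidth]
    field_simp
    ring
  have habs : |x| < 1 - 2 * b / (1 - a) := by
    refine lt_of_mul_lt_mul_left ?_ h1a.le
    linarith [one_sub_mul_abs_le_of_mem_cantorLevel ha ha₁.le hd hx]
  rw [neg_add_eq_sub, ← neg_sub]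
  exact abs_lt.1 habs

end LarssonKernel

theorem exists_type_space_positive_iterate_general_case_general
    (a b : ℝ) (ha : 0 < a) (ha₃ : 3 * a < 1) (hab : 3 * a + 2 * b < 1)
    (c : ℝ) (hc : c = 2 * b / (1 - a)) :
    ∃ (l : ℕ) (T : Set ℝ) (α : Fin (3 ^ l) → ℝ) (len : ℝ),
      0 < len ∧
      T = ⋃ i : Fin (3 ^ l), Set.Icc (α i) (α i + len) ∧
      (∀ i j : Fin (3 ^ l), i ≠ j →
        Disjoint (Set.Icc (α i) (α i + len)) (Set.Icc (α j) (α j + len))) ∧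
      IsClosed T ∧
      T ⊆ Set.Ioo (-1 + c) (1 - c) ∧
      0 ∈ interior T ∧
      (∃ κ > (0 : ℝ), ∀ x ∈ T, ∃ u : ℝ,
        Set.Ioo u (u + κ) ⊆ {y : ℝ | 0 < larssonKernel a b T x y}) ∧
      (∃ n : ℕ, ∀ x ∈ T, ∀ y ∈ T, 0 < larssonKernelIter a b T n x y) := by
  have ha₁ : a < 1 := by linarith
  have ht : 0 < larssonWidth a b := by unfold larssonWidth; linarith
  have hd : 0 < larssonShift a b := by unfold larssonShift; linarith
  obtain ⟨l, hl⟩ := exists_pow_mul_lt ha.le ha₁ (larssonShift a b * (1 - 3 * a) / 2) ht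
  obtain ⟨α, hα, hdisj⟩ := exists_cantorLevel_eq_iUnion_Icc ha ha₃ hd l
  refine ⟨l, cantorLevel a (larssonShift a b) l, α, 3 * (a ^ l * larssonShift a b), by positivity,
    hα, hdisj, (isCompact_cantorLevel a _ l).isClosed, ?_, zero_mem_interior_cantorLevel ha hd l,
    exists_Ioo_subset_larssonKernel_pos ha ha₃.le hd hl,
    exists_larssonKernelIter_pos ha ha₃.le hd hl⟩
  rw [hc]
  exact cantorLevel_subset_Ioo ha ha₁ hd.le hl

/-- (General case)  There exist `l ∈ ℕ` and a closed set `T ⊂ (−1+c, 1−c)` which is the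
union of `3^l` pairwise disjoint closed intervals of equal (positive) length, with `0` in
the interior of `T`, together with `κ > 0` such that for every `x ∈ T` the set
`{y : m_T(x,y) > 0}` contains an interval of length `κ`, and moreover an `n` such that
`m_T^{(n)} > 0` on `T × T`.  (Recall `larssonKernelIter a b T n = m_T^{(n+1)}`.) -/
theorem exists_type_space_positive_iterate_general_case
    (a b : ℝ) (ha : 1 / 4 < a) (hb : 0 < b) (hab : 3 * a + 2 * b < 1)
    (c : ℝ) (hc : c = 2 * b / (1 - a)) :
    ∃ (l : ℕ) (T : Set ℝ) (α : Fin (3 ^ l) → ℝ) (len : ℝ),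
      0 < len ∧
      T = ⋃ i : Fin (3 ^ l), Set.Icc (α i) (α i + len) ∧
      (∀ i j : Fin (3 ^ l), i ≠ j →
        Disjoint (Set.Icc (α i) (α i + len)) (Set.Icc (α j) (α j + len))) ∧
      IsClosed T ∧
      T ⊆ Set.Ioo (-1 + c) (1 - c) ∧
      0 ∈ interior T ∧
      (∃ κ > (0 : ℝ), ∀ x ∈ T, ∃ u : ℝ,
        Set.Ioo u (u + κ) ⊆ {y : ℝ | 0 < larssonKernel a b T x y}) ∧
      (∃ n : ℕ, ∀ x ∈ T, ∀ y ∈ T, 0 < larssonKernelIter a b T n x y) := by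
  exact exists_type_space_positive_iterate_general_case_general a b (by linarith) (by linarith) hab
    c hc
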